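/- For a natural number k ≥ 1, let S_k ⊂ ℂ be the k-star S_k = ⋃_{j=0}^{k−1} {t·exp(2πij/k) : t ∈ ℝ, 0 ≤ t ≤ 1} (k unit segments emanating from the origin at equally spaced angles). For every k ≥ 1 and every natural number n ≥ 2 there exists an identifying function f : Conf_n(S_k) → S_k, i.e. a continuous map with f(x) ≠ x(i) for every configuration x and every index i. -/

import Mathlib

/-- The ordered configuration space of `n` points in `X`, topologized as a
subspace of the product `X^n`. -/
abbrev Conf (n : ℕ) (X : Type*) [TopologicalSpace X] : Type _ :=
  {x : Fin n → X // Function.Injective x}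

/-- The `k`-star: `k` unit segments emanating from the origin at equally spaced
angles, the `j`-th segment being `{t · exp(2πij/k) : 0 ≤ t ≤ 1}`. -/
def kStar (k : ℕ) : Set ℂ :=
  ⋃ j ∈ Finset.range k,
    (fun t : ℝ => (t : ℂ) * Complex.exp (((2 * Real.pi * j / k : ℝ) : ℂ) * Complex.I)) ''
      Set.Icc 0 1

/-!
In a tree, a particle at `a` can move along the unique path towards any other point `b`, and this
motion depends continuously on `a` and `b`. Given a configuration `x`, let a new particle leave
`x 0` in the direction of `x 1` for a short time: it is no longer at `x 0`, and it has not yet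
reached any other `x i`. Near each configuration a constant time is short enough, and the admissible
times form an interval, so a partition of unity yields a time depending continuously on `x`.

On a star with arms `[0, u j]`, the height of `z` with respect to the arm `j` is `‖z‖` if `z` lies
on that arm and `-‖z‖` otherwise. Averaging the heights of `a` and `b` and forgetting the negative
ones gives the path from `a` to `b`.
-/

open Set Topology

/-- The existence of an identifying function for `n` points of `X`: a continuous choice of a further
point of `X` away from any `n` given distinct points. -/
def HasIdentifyingFunction (n : ℕ) (X : Type*) [TopologicalSpace X] : Prop :=
  ∃ f : Conf n X → X, Continuous f ∧ ∀ (x : Conf n X) (i : Fin n), f x ≠ x.1 i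

theorem Conf.continuous_coord {n : ℕ} {X : Type*} [TopologicalSpace X] (i : Fin n) :
    Continuous fun x : Conf n X => x.1 i :=
  (continuous_apply i).comp continuous_subtype_val

section PathSystem

variable {X : Type*} [TopologicalSpace X]

/-- A continuous choice of a path `t ↦ γ (a, b, t)` that starts at `a` and, when `a ≠ b`, never
returns to `a`. The path is meant to head for `b`, but its endpoint is irrelevant here. -/
structure IsDepartingPathSystem (γ : X × X × unitInterval → X) : Prop where
  continuous : Continuous γ
  source (a b : X) : γ (a, b, 0) = a
  ne_source {a b : X} (hab : a ≠ b) {t : unitInterval} (ht : 0 < t) : γ (a, b, t) ≠ a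

namespace IsDepartingPathSystem

variable [T2Space X] {γ : X × X × unitInterval → X} {n : ℕ} {i₀ i₁ : Fin n}

theorem exists_eventually_forall_ne (hγ : IsDepartingPathSystem γ) (hi : i₀ ≠ i₁) (x : Conf n X) :
    ∃ c : unitInterval, 0 < c ∧
      ∀ᶠ y in 𝓝 x, ∀ t, 0 < t → t ≤ c → ∀ i, γ (y.1 i₀, y.1 i₁, t) ≠ y.1 i := by
  have avoids_others : ∀ᶠ p in 𝓝 x ×ˢ 𝓝 (0 : unitInterval), ∀ i, i ≠ i₀ →
      γ (p.1.1 i₀, p.1.1 i₁, p.2) ≠ p.1.1 i := by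
    rw [← nhds_prod_eq]
    refine Filter.eventually_all.2 fun i => Filter.eventually_imp_distrib_left.2 fun hne => ?_
    have coord_continuous (j : Fin n) :
        Continuous fun p : Conf n X × unitInterval => p.1.1 j :=
      (Conf.continuous_coord j).comp continuous_fst
    have path_continuous := hγ.continuous.comp
      ((coord_continuous i₀).prodMk ((coord_continuous i₁).prodMk continuous_snd))
    refine (isOpen_ne_fun path_continuous (coord_continuous i)).mem_nhds ?_
    simpa [hγ.source] using x.2.ne hne.symm
  obtain ⟨P, hP, Q, hQ, hPQ⟩ := Filter.eventually_prod_iff.1 avoids_others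
  obtain ⟨c, hc, hcQ⟩ := nhds_bot_basis_Iic.eventually_iff.1 hQ
  refine ⟨c, hc, hP.mono fun y hy t ht htc i => ?_⟩
  obtain rfl | hne := eq_or_ne i i₀
  · exact hγ.ne_source (y.2.ne hi) ht
  · exact hPQ hy (hcQ htc) i hne

theorem hasIdentifyingFunction [ParacompactSpace (Conf n X)] (hγ : IsDepartingPathSystem γ)
    (hn : 2 ≤ n) : HasIdentifyingFunction n X := by
  obtain ⟨i₀, i₁, hi⟩ := (Fin.nontrivial_iff_two_le.2 hn).exists_pair_ne
  let admissible (x : Conf n X) : Set ℝ :=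
    {s ∈ Ioc 0 1 | ∀ t : unitInterval, 0 < t → t ≤ s → ∀ i, γ (x.1 i₀, x.1 i₁, t) ≠ x.1 i}
  have admissible_convex (x : Conf n X) : Convex ℝ (admissible x) :=
    OrdConnected.convex ⟨fun _ hr _ hs _ hq =>
      ⟨⟨hr.1.1.trans_le hq.1, hq.2.trans hs.1.2⟩, fun t ht htq => hs.2 t ht (htq.trans hq.2)⟩⟩
  obtain ⟨s, hs⟩ := exists_continuous_forall_mem_convex_of_local_const admissible_convex fun x => by
    obtain ⟨c, hc, hcx⟩ := hγ.exists_eventually_forall_ne hi x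
    exact ⟨c, hcx.mono fun y hy => ⟨⟨hc, c.2.2⟩, hy⟩⟩
  let time (x : Conf n X) : unitInterval := ⟨s x, (hs x).1.1.le, (hs x).1.2⟩
  have time_continuous : Continuous time := s.continuous.subtype_mk _
  have path_continuous := hγ.continuous.comp
    ((Conf.continuous_coord i₀).prodMk ((Conf.continuous_coord i₁).prodMk time_continuous))
  exact ⟨fun x => γ (x.1 i₀, x.1 i₁, time x), path_continuous,
    fun x => (hs x).2 (time x) (hs x).1.1 le_rfl⟩

end IsDepartingPathSystem

end PathSystem

section Star

theorem sum_posPart_smul_of_nonpos {ι M : Type*} [Fintype ι] [AddCommMonoid M] [Module ℝ M]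
    {u : ι → M} {w : ι → ℝ} {i : ι} (hi : 0 ≤ w i) (hw : ∀ j ≠ i, w j ≤ 0) :
    ∑ j, (w j)⁺ • u j = w i • u i := by
  rw [Fintype.sum_eq_single i fun j hj => by rw [posPart_eq_zero.2 (hw j hj), zero_smul],
    posPart_eq_self.2 hi]

variable {ι E : Type*} [NormedAddCommGroup E] [NormedSpace ℝ E] {u : ι → E} {i j : ι} {p q t : ℝ}

/-- The star with centre `0` and tips `u i`: the union of the segments from `0` to `u i`. -/
def starWithTips (u : ι → E) : Set E :=
  ⋃ i, (fun t : ℝ => t • u i) '' Icc 0 1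

theorem mem_starWithTips {z : E} :
    z ∈ starWithTips u ↔ ∃ i, ∃ p ∈ Icc (0 : ℝ) 1, p • u i = z := by
  simp [starWithTips]

theorem starWithTips_range (u : ι → E) :
    starWithTips (Subtype.val : range u → E) = starWithTips u := by
  ext z
  simp [mem_starWithTips]

open Classical in
/-- The height of a point with respect to the arm spanned by `u i`. For unit tips and a point of the
star, it is the distance to the centre, counted negatively when the point is not on the arm. -/
noncomputable def signedHeight (u : ι → E) (i : ι) (z : E) : ℝ :=
  if ‖z‖ • u i = z then ‖z‖ else -‖z‖

theorem signedHeight_smul_self (hu : ∀ i, ‖u i‖ = 1) (hp : 0 ≤ p) :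
    signedHeight u i (p • u i) = p := by
  simp [signedHeight, norm_smul, hu, abs_of_nonneg hp]

theorem signedHeight_smul_of_ne (hu : ∀ i, ‖u i‖ = 1) (hinj : u.Injective) (hij : i ≠ j)
    (hp : 0 ≤ p) : signedHeight u i (p • u j) = -p := by
  obtain rfl | hp₀ := hp.eq_or_lt
  · simp [signedHeight]
  · simp [signedHeight, norm_smul, hu, abs_of_nonneg hp, smul_right_inj hp₀.ne', hinj.ne hij]

theorem smul_eq_of_signedHeight_eq {z : E} (hp : 0 ≤ p) (hz : signedHeight u i z = p) :
    p • u i = z := by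
  unfold signedHeight at hz
  split_ifs at hz with h
  · rwa [← hz]
  · have hz₀ : ‖z‖ = 0 := by linarith [norm_nonneg z]
    simp [← hz, norm_eq_zero.1 hz₀]

theorem continuousOn_signedHeight [Finite ι] (hu : ∀ i, ‖u i‖ = 1) (hinj : u.Injective) (i : ι) :
    ContinuousOn (signedHeight u i) (starWithTips u) := by
  refine (locallyFinite_of_finite _).continuousOn_iUnion
    (fun j => (isCompact_Icc.image (by fun_prop)).isClosed) fun j => ?_
  obtain rfl | hij := eq_or_ne i j
  · refine continuous_norm.continuousOn.congr ?_
    rintro _ ⟨p, hp, rfl⟩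
    simp [signedHeight_smul_self hu hp.1, norm_smul, hu, abs_of_nonneg hp.1]
  · refine continuous_norm.neg.continuousOn.congr ?_
    rintro _ ⟨p, hp, rfl⟩
    simp [signedHeight_smul_of_ne hu hinj hij hp.1, norm_smul, hu, abs_of_nonneg hp.1]

variable [Fintype ι]

/-- The path in the star from `a` to `b`, obtained by interpolating all signed heights linearly and
dropping the negative ones; at most one of them is positive. -/
noncomputable def starPath (u : ι → E) (a b : E) (t : ℝ) : E :=
  ∑ j, ((1 - t) * signedHeight u j a + t * signedHeight u j b)⁺ • u j

theorem starPath_smul_self (hu : ∀ i, ‖u i‖ = 1) (hinj : u.Injective) (hp : 0 ≤ p) (hq : 0 ≤ q)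
    (ht : t ∈ Icc (0 : ℝ) 1) :
    starPath u (p • u i) (q • u i) t = ((1 - t) * p + t * q) • u i := by
  have hp' := mul_nonneg (sub_nonneg.2 ht.2) hp
  have hq' := mul_nonneg ht.1 hq
  have hi : (1 - t) * signedHeight u i (p • u i) + t * signedHeight u i (q • u i) =
      (1 - t) * p + t * q := by
    rw [signedHeight_smul_self hu hp, signedHeight_smul_self hu hq]
  rw [starPath, sum_posPart_smul_of_nonpos (i := i), hi]
  · rw [hi]
    exact add_nonneg hp' hq'
  · intro j hj
    rw [signedHeight_smul_of_ne hu hinj hj hp, signedHeight_smul_of_ne hu hinj hj hq]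
    linarith

theorem starPath_smul_of_le (hu : ∀ i, ‖u i‖ = 1) (hinj : u.Injective) (hij : i ≠ j) (hp : 0 ≤ p)
    (hq : 0 ≤ q) (ht : t ∈ Icc (0 : ℝ) 1) (h : t * q ≤ (1 - t) * p) :
    starPath u (p • u i) (q • u j) t = ((1 - t) * p - t * q) • u i := by
  have hp' := mul_nonneg (sub_nonneg.2 ht.2) hp
  have hq' := mul_nonneg ht.1 hq
  have hi : (1 - t) * signedHeight u i (p • u i) + t * signedHeight u i (q • u j) =
      (1 - t) * p - t * q := by
    rw [signedHeight_smul_self hu hp, signedHeight_smul_of_ne hu hinj hij hq]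
    ring
  rw [starPath, sum_posPart_smul_of_nonpos (i := i), hi]
  · rwa [hi, sub_nonneg]
  · intro l hl
    rw [signedHeight_smul_of_ne hu hinj hl hp]
    obtain rfl | hlj := eq_or_ne l j
    · rw [signedHeight_smul_self hu hq]
      linarith
    · rw [signedHeight_smul_of_ne hu hinj hlj hq]
      linarith

theorem starPath_symm (a b : E) (t : ℝ) : starPath u b a (1 - t) = starPath u a b t := by
  simp only [starPath, sub_sub_cancel, add_comm]

theorem starPath_smul_of_ge (hu : ∀ i, ‖u i‖ = 1) (hinj : u.Injective) (hij : i ≠ j) (hp : 0 ≤ p)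
    (hq : 0 ≤ q) (ht : t ∈ Icc (0 : ℝ) 1) (h : (1 - t) * p ≤ t * q) :
    starPath u (p • u i) (q • u j) t = (t * q - (1 - t) * p) • u j := by
  rw [← starPath_symm, starPath_smul_of_le hu hinj hij.symm hq hp
    ⟨sub_nonneg.2 ht.2, sub_le_self 1 ht.1⟩ (by rwa [sub_sub_cancel]), sub_sub_cancel]

theorem starPath_mem (hu : ∀ i, ‖u i‖ = 1) (hinj : u.Injective) {a b : E}
    (ha : a ∈ starWithTips u) (hb : b ∈ starWithTips u) (ht : t ∈ Icc (0 : ℝ) 1) :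
    starPath u a b t ∈ starWithTips u := by
  obtain ⟨i, p, hp, rfl⟩ := mem_starWithTips.1 ha
  obtain ⟨j, q, hq, rfl⟩ := mem_starWithTips.1 hb
  have ht' := sub_nonneg.2 ht.2
  have hp' : (1 - t) * p ∈ Icc (0 : ℝ) 1 :=
    ⟨mul_nonneg ht' hp.1, mul_le_one₀ (sub_le_self 1 ht.1) hp.1 hp.2⟩
  have hq' : t * q ∈ Icc (0 : ℝ) 1 := ⟨mul_nonneg ht.1 hq.1, mul_le_one₀ ht.2 hq.1 hq.2⟩
  rw [mem_starWithTips]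
  obtain rfl | hij := eq_or_ne i j
  · exact ⟨i, _, convex_Icc 0 1 hp hq ht' ht.1 (sub_add_cancel 1 t),
      (starPath_smul_self hu hinj hp.1 hq.1 ht).symm⟩
  obtain h | h := le_total (t * q) ((1 - t) * p)
  · exact ⟨i, _, ⟨sub_nonneg.2 h, (sub_le_self _ hq'.1).trans hp'.2⟩,
      (starPath_smul_of_le hu hinj hij hp.1 hq.1 ht h).symm⟩
  · exact ⟨j, _, ⟨sub_nonneg.2 h, (sub_le_self _ hp'.1).trans hq'.2⟩,
      (starPath_smul_of_ge hu hinj hij hp.1 hq.1 ht h).symm⟩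

theorem signedHeight_starPath_smul (hu : ∀ i, ‖u i‖ = 1) (hinj : u.Injective) (hp : 0 ≤ p) {b : E}
    (hb : b ∈ starWithTips u) (ht : t ∈ Icc (0 : ℝ) 1) :
    signedHeight u i (starPath u (p • u i) b t) = (1 - t) * p + t * signedHeight u i b := by
  obtain ⟨j, q, ⟨hq, -⟩, rfl⟩ := mem_starWithTips.1 hb
  obtain rfl | hij := eq_or_ne i j
  · rw [starPath_smul_self hu hinj hp hq ht, signedHeight_smul_self hu hq,
      signedHeight_smul_self hu]
    exact add_nonneg (mul_nonneg (sub_nonneg.2 ht.2) hp) (mul_nonneg ht.1 hq)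
  rw [signedHeight_smul_of_ne hu hinj hij hq]
  obtain h | h := le_total (t * q) ((1 - t) * p)
  · rw [starPath_smul_of_le hu hinj hij hp hq ht h, signedHeight_smul_self hu (sub_nonneg.2 h)]
    ring
  · rw [starPath_smul_of_ge hu hinj hij hp hq ht h,
      signedHeight_smul_of_ne hu hinj hij (sub_nonneg.2 h)]
    ring

theorem starPath_zero (hu : ∀ i, ‖u i‖ = 1) (hinj : u.Injective) {a : E}
    (ha : a ∈ starWithTips u) (b : E) : starPath u a b 0 = a := by
  obtain ⟨i, p, ⟨hp, -⟩, rfl⟩ := mem_starWithTips.1 ha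
  simp only [starPath, sub_zero, one_mul, zero_mul, add_zero]
  rw [sum_posPart_smul_of_nonpos (i := i), signedHeight_smul_self hu hp]
  · rwa [signedHeight_smul_self hu hp]
  · intro j hj
    rwa [signedHeight_smul_of_ne hu hinj hj hp, neg_nonpos]

theorem starPath_ne_left (hu : ∀ i, ‖u i‖ = 1) (hinj : u.Injective) {a b : E}
    (ha : a ∈ starWithTips u) (hb : b ∈ starWithTips u) (hab : a ≠ b) (ht : t ∈ Ioc (0 : ℝ) 1) :
    starPath u a b t ≠ a := by
  obtain ⟨i, p, ⟨hp, -⟩, rfl⟩ := mem_starWithTips.1 ha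
  intro h
  have height := signedHeight_starPath_smul (i := i) hu hinj hp hb (Ioc_subset_Icc_self ht)
  rw [h, signedHeight_smul_self hu hp] at height
  have height_eq : signedHeight u i b = p := mul_left_cancel₀ ht.1.ne' (by linarith)
  exact hab (smul_eq_of_signedHeight_eq hp height_eq)

theorem isDepartingPathSystem_starPath (hu : ∀ i, ‖u i‖ = 1) (hinj : u.Injective) :
    IsDepartingPathSystem fun x : starWithTips u × starWithTips u × unitInterval =>
      (⟨starPath u x.1 x.2.1 x.2.2, starPath_mem hu hinj x.1.2 x.2.1.2 x.2.2.2⟩ :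
        starWithTips u) where
  continuous := by
    have height_continuous (i : ι) : Continuous fun z : starWithTips u => signedHeight u i z :=
      (continuousOn_signedHeight hu hinj i).domRestrict
    have time_continuous : Continuous fun x : starWithTips u × starWithTips u × unitInterval =>
        (x.2.2 : ℝ) := by fun_prop
    refine (continuous_finsetSum _ fun i _ => ?_).subtype_mk _
    have left_height := (height_continuous i).comp
      (continuous_fst (Y := starWithTips u × unitInterval))
    have right_height := (height_continuous i).comp
      (continuous_fst.comp (continuous_snd (X := starWithTips u) (Y := _ × unitInterval)))
    exact (continuous_posPart.comp (((continuous_const.sub time_continuous).mul left_height).add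
      (time_continuous.mul right_height))).smul continuous_const
  source a b := Subtype.ext (starPath_zero hu hinj a.2 b)
  ne_source {a b} hab t ht h :=
    starPath_ne_left hu hinj a.2 b.2 (Subtype.coe_ne_coe.2 hab) ⟨ht, t.2.2⟩ (congrArg Subtype.val h)

end Star

theorem kStar_identifying_function_general {ι E : Type*} [Finite ι] [NormedAddCommGroup E]
    [NormedSpace ℝ E] {u : ι → E} (hu : ∀ i, ‖u i‖ = 1) {n : ℕ} (hn : 2 ≤ n) :
    HasIdentifyingFunction n (starWithTips u) := by
  have := Fintype.ofFinite (range u)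
  rw [← starWithTips_range]
  exact (isDepartingPathSystem_starPath (forall_subtype_range_iff.2 hu)
    Subtype.val_injective).hasIdentifyingFunction hn

theorem kStar_eq_starWithTips (k : ℕ) :
    kStar k = starWithTips fun j : Fin k =>
      Complex.exp (((2 * Real.pi * j / k : ℝ) : ℂ) * Complex.I) := by
  ext z
  simp [kStar, mem_starWithTips, Fin.exists_iff]

/-- For every `k ≥ 1` and `n ≥ 2` the `k`-star admits an identifying function
`f : Conf_n(S_k) → S_k`. -/
theorem kStar_identifying_function (k : ℕ) (hk : 1 ≤ k) (n : ℕ) (hn : 2 ≤ n) :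
    ∃ f : Conf n (kStar k) → kStar k, Continuous f ∧
      ∀ (x : Conf n (kStar k)) (i : Fin n), f x ≠ x.1 i := by
  rw [kStar_eq_starWithTips]
  exact kStar_identifying_function_general (fun _ => Complex.norm_exp_ofReal_mul_I _) hn
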